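/- arXiv:2404.05948 — 2 statements merged into one kernel-verified Lean document; each statement's English description precedes it below -/
import Mathlib

section
/- There is a constant C ≥ 0 such that for every precision p ≥ 6, every symmetric round-to-nearest function RN, and all x_h, x_l, y_h, y_l ∈ F_p with RN(x_h + x_l) = x_h, RN(y_h + y_l) = y_h, x_h·y_h < 0 and min(|x_h|, |y_h|) ≤ max(|x_h|, |y_h|)/2 (i.e. r(x_h, y_h) ≤ 1/2), the output of sloppy double-word addition with rounding RN satisfies |z_h + z_l − S| ≤ (3u² + C·u³)·|S|, where u = 2^(−p) and S = x_h + x_l + y_h + y_l. -/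
/-!
Scaling by `±2 ^ j` turns a round-to-nearest function into another one and commutes with the
algorithm, so the larger of the two high words may be assumed to be `X ∈ [1, 2)` and the smaller one
`Y ∈ [-X/2, 0)`; the two argument orders are kept apart because the algorithm is not symmetric.

Since `X + Y ≥ 1/2`, everything of order one lies on a grid fine enough for the error-free
transformations to be visibly exact: `s_l = X + Y - s_h` (`twoSum_left`, `twoSum_right`) and
`z_h + z_l = s_h + w` (`fastTwoSum`). What remains are the rounding errors of `v` and of `w`,
while `|x_l| ≤ u` and `|y_l| ≤ u/2` (`low_le`). In units of `u²` (`core_error`):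

* `X + Y ≥ 1`: the errors are at most `1` and `2`, total `3 ≤ 3 (X + Y)`.
* `X + Y < 1`, `Y ≤ -1/2`: `X + Y` is a float, `s_l = 0`, `w = v`, total `1`.
* `X + Y < 1`, `-1/2 < Y ≤ -1/4`: `s_l` is a multiple of `u/2` bounded by `u/2`. Either
  `|x_l + y_l| ≤ u` and the errors are at most `1/2` and `1`, or `v` is a multiple of `2u²`
  and `s_l + v` is a float, so that only the error `1` of `v` remains.
* `X + Y < 1`, `-1/4 < Y`: the errors are at most `1` and `1`, while `X + Y > 3/4`.

In each case the total is at most `3 (X + Y) u²`. Passing from `X + Y` to `S` costs a term of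
order `u³`.
-/

/-- The radix-2, precision-`p` floating-point numbers with unlimited exponent range. -/
def Fp (p : ℕ) : Set ℝ := {x : ℝ | ∃ M e : ℤ, |M| ≤ 2 ^ p - 1 ∧ x = (M : ℝ) * (2 : ℝ) ^ e}

/-- Round toward `-∞`: the largest floating-point number `≤ x`. -/
noncomputable def RD (p : ℕ) (x : ℝ) : ℝ := sSup {f : ℝ | f ∈ Fp p ∧ f ≤ x}

/-- Round toward `+∞`: the smallest floating-point number `≥ x`. -/
noncomputable def RU (p : ℕ) (x : ℝ) : ℝ := sInf {f : ℝ | f ∈ Fp p ∧ x ≤ f}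

/-- `y` is a faithful rounding of `x`. -/
def Faithful (p : ℕ) (x y : ℝ) : Prop := y = RD p x ∨ y = RU p x

/-- `RN` is a round-to-nearest function for precision `p`. -/
def IsRN (p : ℕ) (RN : ℝ → ℝ) : Prop :=
  (∀ x : ℝ, RN x ∈ Fp p) ∧ ∀ x f : ℝ, f ∈ Fp p → |RN x - x| ≤ |f - x|

/-- `RN` is symmetric. -/
def SymRN (RN : ℝ → ℝ) : Prop := ∀ x : ℝ, RN (-x) = -RN x

/-- Sloppy double-word addition with rounding function `R`. -/
noncomputable def sloppyAdd (R : ℝ → ℝ) (xh xl yh yl : ℝ) : ℝ × ℝ :=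
  let sh := R (xh + yh)
  let a' := R (sh - yh)
  let b' := R (sh - a')
  let sl := R (R (xh - a') + R (yh - b'))
  let v := R (xl + yl)
  let w := R (sl + v)
  let zh := R (sh + w)
  let d := R (zh - sh)
  let zl := R (w - d)
  (zh, zl)

/-! ### Floating-point numbers and grids -/

/-- `t` is an integer power of two. -/
def IsPow (t : ℝ) : Prop := ∃ k : ℤ, t = (2 : ℝ) ^ k

/-- `x` is an integer multiple of `g`. -/
def OnGrid (g x : ℝ) : Prop := ∃ M : ℤ, x = (M : ℝ) * g

/-- The unit roundoff `2 ^ (-p)`. -/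
noncomputable def uu (p : ℕ) : ℝ := (2 : ℝ) ^ (-(p : ℤ))

lemma uu_pos (p : ℕ) : 0 < uu p := by unfold uu; positivity

lemma uu_mul (p : ℕ) : uu p * (2 : ℝ) ^ p = 1 := by
  unfold uu
  rw [zpow_neg, zpow_natCast]
  exact inv_mul_cancel₀ (by positivity)

lemma uu_isPow (p : ℕ) : IsPow (uu p) := ⟨_, rfl⟩

lemma uu_le {p : ℕ} (hp : 6 ≤ p) : uu p ≤ 1 / 64 := by
  have h := zpow_le_zpow_right₀ (one_le_two : (1 : ℝ) ≤ 2) (show -(p : ℤ) ≤ -6 by omega)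
  unfold uu
  refine h.trans (by norm_num)

lemma IsPow.pos {t : ℝ} (h : IsPow t) : 0 < t := by
  obtain ⟨k, rfl⟩ := h
  positivity

lemma IsPow.mul {s t : ℝ} (hs : IsPow s) (ht : IsPow t) : IsPow (s * t) := by
  obtain ⟨k, rfl⟩ := hs
  obtain ⟨l, rfl⟩ := ht
  exact ⟨k + l, (zpow_add₀ two_ne_zero k l).symm⟩

/-- Powers of two are at least a factor two apart. -/
lemma IsPow.le_of_lt_two_mul {s t : ℝ} (hs : IsPow s) (ht : IsPow t) (h : s < 2 * t) : s ≤ t := by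
  obtain ⟨k, rfl⟩ := hs
  obtain ⟨m, rfl⟩ := ht
  have h1 : (2 : ℝ) ^ k < 2 ^ (1 + m) := by
    rw [zpow_add₀ two_ne_zero, zpow_one]
    exact h
  have h2 := (zpow_lt_zpow_iff_right₀ (one_lt_two : (1 : ℝ) < 2)).1 h1
  exact zpow_le_zpow_right₀ one_le_two (by omega)

lemma isPow_one : IsPow 1 := ⟨0, by norm_num⟩
lemma isPow_two : IsPow 2 := ⟨1, by norm_num⟩
lemma isPow_four : IsPow 4 := ⟨2, by norm_num⟩
lemma isPow_half : IsPow (1 / 2) := ⟨-1, by norm_num⟩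
lemma isPow_quarter : IsPow (1 / 4) := ⟨-2, by norm_num⟩

lemma OnGrid.add {g x y : ℝ} (hx : OnGrid g x) (hy : OnGrid g y) : OnGrid g (x + y) := by
  obtain ⟨M, rfl⟩ := hx
  obtain ⟨N, rfl⟩ := hy
  exact ⟨M + N, by push_cast; ring⟩

lemma OnGrid.sub {g x y : ℝ} (hx : OnGrid g x) (hy : OnGrid g y) : OnGrid g (x - y) := by
  obtain ⟨M, rfl⟩ := hx
  obtain ⟨N, rfl⟩ := hy
  exact ⟨M - N, by push_cast; ring⟩

lemma OnGrid.self (g : ℝ) : OnGrid g g := ⟨1, by simp⟩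

/-- Powers of two are divisible by the smaller ones. -/
lemma OnGrid.coarsen {g h x : ℝ} (hx : OnGrid g x) (hg : IsPow g) (hh : IsPow h) (hle : h ≤ g) :
    OnGrid h x := by
  obtain ⟨M, rfl⟩ := hx
  obtain ⟨k, rfl⟩ := hg
  obtain ⟨l, rfl⟩ := hh
  have hkl : l ≤ k := (zpow_le_zpow_iff_right₀ (one_lt_two : (1 : ℝ) < 2)).1 hle
  obtain ⟨n, rfl⟩ : ∃ n : ℕ, k = l + n := ⟨(k - l).toNat, by omega⟩
  refine ⟨M * 2 ^ n, ?_⟩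
  rw [zpow_add₀ two_ne_zero, zpow_natCast]
  push_cast
  ring

lemma exists_binade {x : ℝ} (hx : x ≠ 0) : ∃ t, IsPow t ∧ t ≤ |x| ∧ |x| < 2 * t := by
  obtain ⟨k, h1, h2⟩ := exists_mem_Ico_zpow (abs_pos.2 hx) (one_lt_two : (1 : ℝ) < 2)
  refine ⟨_, ⟨k, rfl⟩, h1, ?_⟩
  rw [zpow_add₀ two_ne_zero] at h2
  linarith

lemma IsPow.mem {p : ℕ} (hp : 1 ≤ p) {t : ℝ} (ht : IsPow t) : t ∈ Fp p := by
  obtain ⟨k, rfl⟩ := ht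
  refine ⟨1, k, ?_, by simp⟩
  have : (2 : ℤ) ^ 1 ≤ 2 ^ p := pow_le_pow_right₀ (by norm_num) hp
  rw [abs_one]
  linarith

lemma neg_mem_Fp {p : ℕ} {x : ℝ} (hx : x ∈ Fp p) : -x ∈ Fp p := by
  obtain ⟨M, e, hM, rfl⟩ := hx
  exact ⟨-M, e, by simpa using hM, by push_cast; ring⟩

lemma mul_mem_Fp {p : ℕ} {x t : ℝ} (ht : IsPow t) (hx : x ∈ Fp p) : t * x ∈ Fp p := by
  obtain ⟨M, e, hM, rfl⟩ := hx
  obtain ⟨k, rfl⟩ := ht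
  exact ⟨M, k + e, hM, by rw [zpow_add₀ two_ne_zero]; ring⟩

/-- A multiple of `g` of magnitude at most `2 ^ p * g` is a float. -/
lemma OnGrid.mem {p : ℕ} (hp : 1 ≤ p) {g x : ℝ} (hg : IsPow g) (hx : OnGrid g x)
    (hle : |x| * uu p ≤ g) : x ∈ Fp p := by
  obtain ⟨M, rfl⟩ := hx
  have hg0 := hg.pos
  have hu := uu_mul p
  have hu0 := uu_pos p
  have hM : |(M : ℝ)| ≤ 2 ^ p := by
    rw [abs_mul, abs_of_pos hg0] at hle
    have h2 : (|(M : ℝ)| * uu p) * g ≤ 1 * g := by linarith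
    have h3 := le_of_mul_le_mul_right h2 hg0
    rw [← hu, mul_comm (uu p)] at h3
    exact le_of_mul_le_mul_right h3 hu0
  have hMz : |M| ≤ 2 ^ p := by exact_mod_cast hM
  -- A significand equal to `± 2 ^ p` is not admissible as it stands, but gives a power of two.
  have hP : (2 : ℝ) ^ p * g ∈ Fp p := IsPow.mem hp (IsPow.mul ⟨p, by simp⟩ hg)
  rcases hMz.lt_or_eq with h | h
  · obtain ⟨k, rfl⟩ := hg
    exact ⟨M, k, by omega, rfl⟩
  · rcases abs_eq (by positivity) |>.1 h with h | h
    · rw [h]; push_cast; exact hP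
    · rw [h]; push_cast
      have := neg_mem_Fp hP
      rwa [← neg_mul] at this

/-- A float of magnitude at least `t` is a multiple of the spacing `2 t u` in that binade. -/
lemma onGrid_of_mem {p : ℕ} {t x : ℝ} (ht : IsPow t) (hx : x ∈ Fp p) (hle : t ≤ |x|) :
    OnGrid (2 * t * uu p) x := by
  obtain ⟨M, e, hM, rfl⟩ := hx
  obtain ⟨k, rfl⟩ := ht
  have he : (0 : ℝ) < 2 ^ e := by positivity
  have hM' : |(M : ℝ)| < 2 ^ p := by
    have : |M| < 2 ^ p := by omega
    exact_mod_cast this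
  rw [abs_mul, abs_of_pos he] at hle
  have h1 : (2 : ℝ) ^ k < 2 ^ ((p : ℤ) + e) := by
    rw [zpow_add₀ two_ne_zero, zpow_natCast]
    exact hle.trans_lt (mul_lt_mul_of_pos_right hM' he)
  have h2 : k < p + e := (zpow_lt_zpow_iff_right₀ (one_lt_two : (1 : ℝ) < 2)).1 h1
  have h3 : (2 : ℝ) * 2 ^ k * uu p = 2 ^ (1 + k + -(p : ℤ)) := by
    unfold uu
    rw [zpow_add₀ two_ne_zero, zpow_add₀ two_ne_zero, zpow_one]
  rw [h3]
  exact OnGrid.coarsen (g := 2 ^ e) ⟨M, rfl⟩ ⟨e, rfl⟩ ⟨_, rfl⟩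
    (zpow_le_zpow_right₀ one_le_two (by omega))

/-! ### Round-to-nearest functions -/

lemma IsRN.eq {p : ℕ} {RN : ℝ → ℝ} (h : IsRN p RN) {x : ℝ} (hx : x ∈ Fp p) : RN x = x := by
  have := h.2 x x hx
  rw [sub_self, abs_zero] at this
  exact sub_eq_zero.1 (abs_nonpos_iff.1 this)

lemma IsRN.err {p : ℕ} (hp : 1 ≤ p) {RN : ℝ → ℝ} (h : IsRN p RN) {x t : ℝ} (ht : IsPow t)
    (hx : |x| ≤ t) : |RN x - x| ≤ t * uu p / 2 := by
  have hg : IsPow (t * uu p) := ht.mul (uu_isPow p)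
  have hg0 := hg.pos
  set g := t * uu p with hgdef
  -- The competitor is the nearest multiple of `t u`, which stays in `[-t, t]`.
  have hr : |((round (x / g) : ℤ) : ℝ) * g - x| ≤ g / 2 := by
    have h1 := abs_sub_round (x / g)
    have h2 : ((round (x / g) : ℤ) : ℝ) * g - x = -((x / g - round (x / g)) * g) := by
      field_simp
      ring
    rw [h2, abs_neg, abs_mul, abs_of_pos hg0]
    nlinarith
  refine (h.2 x (round (x / g) * g) ?_).trans hr
  refine OnGrid.mem hp hg ⟨_, rfl⟩ ?_
  have hu0 := uu_pos p
  have hpw : (2 : ℝ) ^ p * g = t := by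
    rw [hgdef]
    linear_combination t * uu_mul p
  have hxg : |x / g| ≤ 2 ^ p := by
    rw [abs_div, abs_of_pos hg0, div_le_iff₀ hg0, hpw]
    exact hx
  have hb : |((round (x / g) : ℤ) : ℝ)| ≤ 2 ^ p := by
    have h1 := abs_le.1 (abs_sub_round (x / g))
    have h2 := abs_le.1 hxg
    have h3 : |round (x / g)| < 2 ^ p + 1 := by
      have : |((round (x / g) : ℤ) : ℝ)| < 2 ^ p + 1 := by
        rw [abs_lt]
        constructor <;> linarith
      exact_mod_cast this
    have h4 : |round (x / g)| ≤ 2 ^ p := by omega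
    exact_mod_cast h4
  rw [abs_mul, abs_of_pos hg0]
  calc |((round (x / g) : ℤ) : ℝ)| * g * uu p ≤ 2 ^ p * g * uu p := by gcongr
    _ = g := by rw [hpw]

lemma IsRN.ge {p : ℕ} {RN : ℝ → ℝ} (h : IsRN p RN) {x t : ℝ} (ht : t ∈ Fp p)
    (hx : t ≤ x) : t ≤ RN x := by
  by_contra hc
  push Not at hc
  have := h.2 x t ht
  rw [abs_of_nonpos (by linarith), abs_of_nonpos (by linarith)] at this
  linarith

lemma IsRN.le {p : ℕ} {RN : ℝ → ℝ} (h : IsRN p RN) {x t : ℝ} (ht : t ∈ Fp p)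
    (hx : x ≤ t) : RN x ≤ t := by
  by_contra hc
  push Not at hc
  have := h.2 x t ht
  rw [abs_of_nonneg (by linarith), abs_of_nonneg (by linarith)] at this
  linarith

lemma IsRN.abs_ge {p : ℕ} {RN : ℝ → ℝ} (h : IsRN p RN) {x t : ℝ} (ht : t ∈ Fp p)
    (hx : t ≤ |x|) : t ≤ |RN x| := by
  rcases le_abs.1 hx with hx | hx
  · exact (h.ge ht hx).trans (le_abs_self _)
  · have := h.le (neg_mem_Fp ht) (show x ≤ -t by linarith)
    exact le_trans (by linarith) (neg_le_abs _)

/-- The low word of a double-word number is at most half the spacing at the high word: both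
grid neighbours of the high word are floats. -/
lemma low_le {p : ℕ} (hp : 1 ≤ p) {RN : ℝ → ℝ} (h : IsRN p RN) {a l t : ℝ} (ha : a ∈ Fp p)
    (ha0 : a ≠ 0) (hl : RN (a + l) = a) (ht : IsPow t) (hlt : |a| < 2 * t) : |l| ≤ t * uu p := by
  have hu0 := uu_pos p
  obtain ⟨s, hs, hs1, hs2⟩ := exists_binade ha0
  have hst : s ≤ t := hs.le_of_lt_two_mul ht (hs1.trans_lt hlt)
  have hg : IsPow (2 * s * uu p) := (isPow_two.mul hs).mul (uu_isPow p)
  have hgr := onGrid_of_mem hs ha hs1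
  have hs0 := hs.pos
  set g := 2 * s * uu p with hgdef
  have hg0 := hg.pos
  have hag : |a| ≤ 2 * s - g := by
    obtain ⟨M, hM⟩ := hgr
    have hpw : (2 : ℝ) ^ p * g = 2 * s := by
      rw [hgdef]
      linear_combination 2 * s * uu_mul p
    rw [hM, abs_mul, abs_of_pos hg0, ← hpw] at hs2
    have h1 : |(M : ℝ)| < 2 ^ p := lt_of_mul_lt_mul_right hs2 hg0.le
    have h2 : |M| < 2 ^ p := by exact_mod_cast h1
    have h3 : |M| ≤ 2 ^ p - 1 := by omega
    have h4 : |(M : ℝ)| ≤ 2 ^ p - 1 := by exact_mod_cast h3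
    rw [hM, abs_mul, abs_of_pos hg0]
    nlinarith
  have key : ∀ b : ℝ, |b| ≤ 2 * s → OnGrid g b → b ∈ Fp p := fun b hb hgb =>
    hgb.mem hp hg (by rw [hgdef]; gcongr)
  have hb := abs_le.1 hag
  have h1 := h.2 (a + l) (a + g)
    (key _ (abs_le.2 ⟨by linarith, by linarith⟩) (hgr.add (OnGrid.self g)))
  have h2 := h.2 (a + l) (a - g)
    (key _ (abs_le.2 ⟨by linarith, by linarith⟩) (hgr.sub (OnGrid.self g)))
  rw [hl] at h1 h2
  have e1 : |a - (a + l)| = |l| := by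
    rw [show a - (a + l) = -l by ring, abs_neg]
  rw [e1] at h1 h2
  have hl2 : |l| ≤ g / 2 := by
    rw [abs_le]
    have q1 := sq_le_sq.2 h1
    have q2 := sq_le_sq.2 h2
    constructor <;> nlinarith
  calc |l| ≤ g / 2 := hl2
    _ = s * uu p := by rw [hgdef]; ring
    _ ≤ t * uu p := by gcongr

/-! ### Error-free transformations in the normalized situation -/

lemma zero_mem_Fp (p : ℕ) : (0 : ℝ) ∈ Fp p := by
  refine ⟨0, 0, ?_, by simp⟩
  have : (1 : ℤ) ≤ 2 ^ p := one_le_pow₀ (by norm_num)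
  simpa using this

/-- A grid carrying a given small float, on which `2 ^ p` steps cover its magnitude. -/
lemma exists_grid {p : ℕ} {Y T : ℝ} (hY : Y ∈ Fp p) (hY0 : Y ≠ 0) (hT : IsPow T)
    (hYT : |Y| < 2 * T) :
    ∃ g, IsPow g ∧ g ≤ 2 * T * uu p ∧ OnGrid g Y ∧ |Y| * uu p ≤ g := by
  have hu0 := uu_pos p
  obtain ⟨t, ht, ht1, ht2⟩ := exists_binade hY0
  refine ⟨2 * t * uu p, (isPow_two.mul ht).mul (uu_isPow p), ?_, onGrid_of_mem ht hY ht1, ?_⟩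
  · have := ht.le_of_lt_two_mul hT (ht1.trans_lt hYT)
    gcongr
  · gcongr

/-- Facts on `s = RN (X + Y)` shared by the two orders of the arguments. -/
lemma sum_facts {p : ℕ} (hp : 6 ≤ p) {RN : ℝ → ℝ} (h : IsRN p RN) {X Y : ℝ} (hX : X ∈ Fp p)
    (hX1 : 1 ≤ X) (hX2 : X < 2) (hY0 : Y < 0) (hYX : -Y ≤ X / 2) :
    1 / 2 ≤ RN (X + Y) ∧ |RN (X + Y) - (X + Y)| ≤ uu p ∧ |RN (X + Y) - (X + Y)| ≤ |Y| ∧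
      OnGrid (uu p) (RN (X + Y)) ∧ OnGrid (uu p) X ∧ X ≤ 2 - 2 * uu p := by
  have hu0 := uu_pos p
  have hu := uu_le hp
  have hs : 1 / 2 ≤ RN (X + Y) := h.ge (isPow_half.mem (by omega)) (by linarith)
  have hse : |RN (X + Y) - (X + Y)| ≤ uu p := by
    have := h.err (by omega) isPow_two (x := X + Y) (abs_le.2 ⟨by linarith, by linarith⟩)
    linarith
  have hsg : OnGrid (uu p) (RN (X + Y)) := by
    have := onGrid_of_mem isPow_half (h.1 (X + Y)) (hs.trans (le_abs_self _))
    rwa [show 2 * (1 / 2) * uu p = uu p by ring] at this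
  have hXg : OnGrid (2 * uu p) X := by
    have := onGrid_of_mem isPow_one hX (hX1.trans (le_abs_self _))
    rwa [mul_one] at this
  refine ⟨hs, hse, ?_, hsg,
    hXg.coarsen (isPow_two.mul (uu_isPow p)) (uu_isPow p) (by linarith), ?_⟩
  · have h1 := h.2 (X + Y) X hX
    rwa [show X - (X + Y) = -Y by ring, abs_neg] at h1
  · obtain ⟨M, rfl⟩ := hXg
    have h1 : (M : ℝ) < 2 ^ p := by
      have h2 : (M : ℝ) * (2 * uu p) < 2 ^ p * (2 * uu p) := by
        linarith [uu_mul p, mul_comm (uu p) ((2 : ℝ) ^ p)]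
      exact lt_of_mul_lt_mul_right h2 (by positivity)
    have h2 : M < 2 ^ p := by exact_mod_cast h1
    have h3 : M ≤ 2 ^ p - 1 := by omega
    have h4 : (M : ℝ) ≤ 2 ^ p - 1 := by exact_mod_cast h3
    nlinarith [uu_mul p]

/-- Exactness of the low part when the argument of larger magnitude comes second. -/
lemma twoSum_right {p : ℕ} (hp : 6 ≤ p) {RN : ℝ → ℝ} (h : IsRN p RN) {X Y : ℝ} (hX : X ∈ Fp p)
    (hY : Y ∈ Fp p) (hX1 : 1 ≤ X) (hX2 : X < 2) (hY0 : Y < 0) (hYX : -Y ≤ X / 2) {s : ℝ}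
    (hs : s = RN (X + Y)) :
    RN (RN (Y - RN (s - X)) + RN (X - RN (s - RN (s - X)))) = X + Y - s := by
  obtain ⟨h1, h2, h3, h4, h5, h6⟩ := sum_facts hp h hX hX1 hX2 hY0 hYX
  rw [← hs] at h1 h2 h3 h4
  have hu0 := uu_pos p
  have hu := uu_le hp
  have h2' := abs_le.1 h2
  have hp1 : 1 ≤ p := by omega
  have hYa := abs_of_neg hY0
  obtain ⟨g, hg, hgu, hYg, hgY⟩ := exists_grid hY hY0.ne isPow_half (by linarith)
  rw [show 2 * (1 / 2) * uu p = uu p by ring] at hgu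
  have he : X + Y - s ∈ Fp p := by
    refine (((h5.coarsen (uu_isPow p) hg hgu).add hYg).sub
      (h4.coarsen (uu_isPow p) hg hgu)).mem hp1 hg ?_
    rw [abs_sub_comm]
    exact (mul_le_mul_of_nonneg_right h3 hu0.le).trans hgY
  have ha : RN (s - X) = s - X := by
    refine h.eq ((h4.sub h5).mem hp1 (uu_isPow p) ?_)
    have : |s - X| ≤ 1 := abs_le.2 ⟨by linarith, by linarith⟩
    nlinarith
  rw [ha, show s - (s - X) = X by ring, h.eq hX, sub_self, h.eq (zero_mem_Fp p), add_zero,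
    show Y - (s - X) = X + Y - s by ring, h.eq he, h.eq he]

/-- Exactness of the low part when the argument of larger magnitude comes first. -/
lemma twoSum_left {p : ℕ} (hp : 6 ≤ p) {RN : ℝ → ℝ} (h : IsRN p RN) {X Y : ℝ} (hX : X ∈ Fp p)
    (hY : Y ∈ Fp p) (hX1 : 1 ≤ X) (hX2 : X < 2) (hY0 : Y < 0) (hYX : -Y ≤ X / 2) {s : ℝ}
    (hs : s = RN (X + Y)) :
    RN (RN (X - RN (s - Y)) + RN (Y - RN (s - RN (s - Y)))) = X + Y - s := by
  obtain ⟨h1, h2, h3, h4, h5, h6⟩ := sum_facts hp h hX hX1 hX2 hY0 hYX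
  rw [← hs] at h1 h2 h3 h4
  have hu0 := uu_pos p
  have hu := uu_le hp
  have h2' := abs_le.1 h2
  have hp1 : 1 ≤ p := by omega
  have hYa := abs_of_neg hY0
  obtain ⟨g, hg, hgu, hYg, hgY⟩ := exists_grid hY hY0.ne isPow_half (by linarith)
  rw [show 2 * (1 / 2) * uu p = uu p by ring] at hgu
  have he : X + Y - s ∈ Fp p := by
    refine (((h5.coarsen (uu_isPow p) hg hgu).add hYg).sub
      (h4.coarsen (uu_isPow p) hg hgu)).mem hp1 hg ?_
    rw [abs_sub_comm]
    exact (mul_le_mul_of_nonneg_right h3 hu0.le).trans hgY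
  -- `X` is a competitor in the rounding of `s - Y`, hence that rounding moves by at most
  -- `|X + Y - s|`.
  have ha := h.2 (s - Y) X hX
  have haF := h.1 (s - Y)
  set a := RN (s - Y)
  rw [show X - (s - Y) = -(s - (X + Y)) by ring, abs_neg] at ha
  have ha' := abs_le.1 (ha.trans h2)
  have hag : OnGrid (uu p) a := by
    have := onGrid_of_mem isPow_half haF (le_trans (by linarith) (le_abs_self a))
    rwa [show 2 * (1 / 2) * uu p = uu p by ring] at this
  have hb : RN (s - a) = s - a := by
    refine h.eq ((h4.sub hag).mem hp1 (uu_isPow p) ?_)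
    have : |s - a| ≤ 1 := abs_le.2 ⟨by linarith, by linarith⟩
    nlinarith
  have hda : RN (X - a) = X - a := by
    refine h.eq ((h5.sub hag).mem hp1 (uu_isPow p) ?_)
    have : |X - a| ≤ 1 := abs_le.2 ⟨by linarith, by linarith⟩
    nlinarith
  have hdb : RN (Y - (s - a)) = Y - (s - a) := by
    refine h.eq ((hYg.sub ((h4.sub hag).coarsen (uu_isPow p) hg hgu)).mem hp1 hg ?_)
    rw [show Y - (s - a) = a - (s - Y) by ring]
    exact (mul_le_mul_of_nonneg_right (ha.trans h3) hu0.le).trans hgY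
  rw [hb, hda, hdb, show X - a + (Y - (s - a)) = X + Y - s by ring, h.eq he]

/-- The final renormalization is exact, because `w` is much smaller than `s`. -/
lemma fastTwoSum {p : ℕ} (hp : 6 ≤ p) {RN : ℝ → ℝ} (h : IsRN p RN) {s w : ℝ} (hsF : s ∈ Fp p)
    (hwF : w ∈ Fp p) (hs : 1 / 2 ≤ s) (hw : |w| ≤ 4 * uu p) :
    RN (s + w) + RN (w - RN (RN (s + w) - s)) = s + w := by
  have hu0 := uu_pos p
  have hu := uu_le hp
  have hp1 : 1 ≤ p := by omega
  have hz := h.2 (s + w) s hsF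
  have hzF := h.1 (s + w)
  set z := RN (s + w)
  rw [show s - (s + w) = -w by ring, abs_neg] at hz
  have hz' := abs_le.1 hz
  have hw' := abs_le.1 hw
  have hG : IsPow (1 / 2 * uu p) := isPow_half.mul (uu_isPow p)
  have hsg : OnGrid (1 / 2 * uu p) s := by
    have := onGrid_of_mem isPow_quarter hsF (le_trans (by linarith) (le_abs_self s))
    rwa [show 2 * (1 / 4) * uu p = 1 / 2 * uu p by ring] at this
  have hzg : OnGrid (1 / 2 * uu p) z := by
    have := onGrid_of_mem isPow_quarter hzF (le_trans (by linarith) (le_abs_self z))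
    rwa [show 2 * (1 / 4) * uu p = 1 / 2 * uu p by ring] at this
  have hd : RN (z - s) = z - s := by
    refine h.eq ((hzg.sub hsg).mem hp1 hG ?_)
    have : |z - s| ≤ 1 / 2 := abs_le.2 ⟨by linarith, by linarith⟩
    nlinarith
  have hl : w - (z - s) ∈ Fp p := by
    by_cases hw0 : w = 0
    · rw [hw0, abs_zero] at hz
      have : w - (z - s) = 0 := by linarith [abs_nonpos_iff.1 hz]
      rw [this]
      exact zero_mem_Fp p
    · obtain ⟨g, hg, hgu, hwg, hgw⟩ :=
        exists_grid hwF hw0 (isPow_four.mul (uu_isPow p)) (by linarith)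
      refine (hwg.sub ((hzg.sub hsg).coarsen hG hg (hgu.trans (by nlinarith)))).mem hp1 hg ?_
      rw [show w - (z - s) = -(z - (s + w)) by ring, abs_neg]
      exact (mul_le_mul_of_nonneg_right hz hu0.le).trans hgw
  rw [hd, h.eq hl]
  ring

/-! ### The two remaining rounding errors -/

/-- With `e` the error of `X + Y`, the rounding errors of `v` and `w` together are at most
`3u² (X + Y)`: the bounds `3, 1, 3/2, 2` (in units of `u²`) of the successive cases are compared
with `3m` for the lower bound `m = 1, 1/2, 1/2, 3/4` of `X + Y`. -/
lemma core_error {p : ℕ} (hp : 6 ≤ p) {RN : ℝ → ℝ} (h : IsRN p RN) {X Y xl yl : ℝ}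
    (hX : X ∈ Fp p) (hY : Y ∈ Fp p) (hX1 : 1 ≤ X) (hX2 : X < 2) (hY0 : Y < 0) (hYX : -Y ≤ X / 2)
    (hxl : RN (X + xl) = X) (hyl : RN (Y + yl) = Y) {e v w : ℝ}
    (he : e = X + Y - RN (X + Y)) (hv : v = RN (xl + yl)) (hw : w = RN (e + v)) :
    |w| ≤ 4 * uu p ∧ |xl + yl| ≤ 3 / 2 * uu p ∧
      |w - (e + v)| + |v - (xl + yl)| ≤ 3 * uu p ^ 2 * (X + Y) := by
  obtain ⟨h1, h2, h3, h4, h5, h6⟩ := sum_facts hp h hX hX1 hX2 hY0 hYX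
  have hu0 := uu_pos p
  have hu := uu_le hp
  have hp1 : 1 ≤ p := by omega
  have hYa := abs_of_neg hY0
  have huu : uu p ^ 2 ≤ uu p / 64 := by nlinarith
  have hx := abs_le.1 (low_le hp1 h hX (by linarith) hxl isPow_one
    (by rw [abs_of_pos (by linarith)]; linarith))
  have hy := abs_le.1 (low_le hp1 h hY hY0.ne hyl isPow_half (by linarith))
  have hxy : |xl + yl| ≤ 3 / 2 * uu p := abs_le.2 ⟨by linarith, by linarith⟩
  have he1 : |e| ≤ uu p := by rw [he, abs_sub_comm]; exact h2
  have ev : |v - (xl + yl)| ≤ uu p ^ 2 := by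
    have := h.err hp1 (isPow_two.mul (uu_isPow p)) (x := xl + yl) (by linarith)
    rw [← hv] at this
    linarith
  have he1' := abs_le.1 he1
  have ev' := abs_le.1 ev
  have hxy' := abs_le.1 hxy
  have ew : |w - (e + v)| ≤ 2 * uu p ^ 2 := by
    have := h.err hp1 (isPow_four.mul (uu_isPow p)) (x := e + v)
      (abs_le.2 ⟨by linarith, by linarith⟩)
    rw [← hw] at this
    linarith
  have ew' := abs_le.1 ew
  refine ⟨abs_le.2 ⟨by linarith, by linarith⟩, hxy, ?_⟩
  have fin : ∀ {E : ℝ} (m : ℝ), m ≤ X + Y → E ≤ 3 * uu p ^ 2 * m → E ≤ 3 * uu p ^ 2 * (X + Y) :=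
    fun m hm hE => hE.trans (mul_le_mul_of_nonneg_left hm (by positivity))
  have husq := sq_nonneg (uu p)
  rcases le_or_gt 1 (X + Y) with hS | hS
  · exact fin 1 hS (by linarith)
  have he2 : |e| ≤ uu p / 2 := by
    have := h.err hp1 isPow_one (x := X + Y) (abs_le.2 ⟨by linarith, by linarith⟩)
    rw [he, abs_sub_comm]
    linarith
  -- Rounding error of `w` once `|e + v|` drops below `2u`.
  have ew2 : |e + v| ≤ 2 * uu p → |w - (e + v)| ≤ uu p ^ 2 := by
    intro hle
    have := h.err hp1 (isPow_two.mul (uu_isPow p)) hle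
    rw [← hw] at this
    linarith
  have he2' := abs_le.1 he2
  rcases le_or_gt Y (-1 / 2) with hYh | hYh
  · have hYg : OnGrid (uu p) Y := by
      have := onGrid_of_mem isPow_half hY (by linarith)
      rwa [show 2 * (1 / 2) * uu p = uu p by ring] at this
    have hF : X + Y ∈ Fp p := by
      refine (h5.add hYg).mem hp1 (uu_isPow p) ?_
      rw [abs_of_pos (by linarith)]
      exact mul_le_of_le_one_left hu0.le hS.le
    have he0 : e = 0 := by rw [he, h.eq hF, sub_self]
    have hwv : w = v := by rw [hw, he0, zero_add, hv]; exact h.eq (h.1 _)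
    rw [hwv, he0, zero_add, sub_self, abs_zero]
    exact fin (1 / 2) (by linarith) (by linarith)
  have hy2 := abs_le.1 (low_le hp1 h hY hY0.ne hyl isPow_quarter (by linarith))
  rcases le_or_gt Y (-1 / 4) with hYq | hYq
  · rcases le_or_gt |xl + yl| (uu p) with hs | hs
    · have ev2 : |v - (xl + yl)| ≤ uu p ^ 2 / 2 := by
        have := h.err hp1 (uu_isPow p) hs
        rw [← hv] at this
        linarith
      have hs' := abs_le.1 hs
      have := ew2 (abs_le.2 ⟨by linarith, by linarith⟩)
      exact fin (1 / 2) (by linarith) (by linarith)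
    · have hvu : uu p ≤ |v| := by rw [hv]; exact h.abs_ge ((uu_isPow p).mem hp1) hs.le
      have hvF : v ∈ Fp p := by rw [hv]; exact h.1 _
      have hG : IsPow (2 * uu p * uu p) := (isPow_two.mul (uu_isPow p)).mul (uu_isPow p)
      have hvg := onGrid_of_mem (uu_isPow p) hvF hvu
      have hle : 2 * uu p * uu p ≤ uu p := by linarith
      have hYg : OnGrid (2 * uu p * uu p) Y :=
        (onGrid_of_mem isPow_quarter hY (by linarith)).coarsen
          ((isPow_two.mul isPow_quarter).mul (uu_isPow p)) hG (by linarith)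
      have heg : OnGrid (2 * uu p * uu p) e := by
        rw [he]
        exact ((h5.coarsen (uu_isPow p) hG hle).add hYg).sub (h4.coarsen (uu_isPow p) hG hle)
      have hF : e + v ∈ Fp p := by
        refine (heg.add hvg).mem hp1 hG ?_
        have : |e + v| ≤ 2 * uu p := abs_le.2 ⟨by linarith, by linarith⟩
        gcongr
      rw [hw, h.eq hF, sub_self, abs_zero]
      exact fin (1 / 2) (by linarith) (by linarith)
  · have := ew2 (abs_le.2 ⟨by linarith, by linarith⟩)
    exact fin (3 / 4) (by linarith) (by linarith)

/-- Replacing `X + Y` by `S = X + Y + (x_l + y_l)` in the bound costs a term of order `u³`. -/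
lemma absorb {u A q E : ℝ} (hu0 : 0 < u) (hu : u ≤ 1 / 64) (hA : 1 / 2 ≤ A)
    (hq : |q| ≤ 3 / 2 * u) (hE : E ≤ 3 * u ^ 2 * A) :
    E ≤ (3 * u ^ 2 + 10 * u ^ 3) * |A + q| := by
  have hq' := abs_le.1 hq
  rw [abs_of_pos (by linarith)]
  have h3 : 0 < u ^ 3 := by positivity
  have h2 : 0 < u ^ 2 := by positivity
  have k1 : u ^ 2 * (A + q) ≥ u ^ 2 * A - 3 / 2 * u ^ 3 := by nlinarith
  have k2 : u ^ 3 * (A + q) ≥ u ^ 3 * (45 / 100) := by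
    apply mul_le_mul_of_nonneg_left _ h3.le
    linarith
  nlinarith

/-- The bound when the larger high word comes first and lies in `[1, 2)`. -/
lemma normalized_left {p : ℕ} (hp : 6 ≤ p) {RN : ℝ → ℝ} (h : IsRN p RN) {X Y xl yl : ℝ}
    (hX : X ∈ Fp p) (hY : Y ∈ Fp p) (hX1 : 1 ≤ X) (hX2 : X < 2) (hY0 : Y < 0) (hYX : -Y ≤ X / 2)
    (hxl : RN (X + xl) = X) (hyl : RN (Y + yl) = Y) :
    |(sloppyAdd RN X xl Y yl).1 + (sloppyAdd RN X xl Y yl).2 - (X + xl + Y + yl)| ≤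
      (3 * uu p ^ 2 + 10 * uu p ^ 3) * |X + xl + Y + yl| := by
  simp only [sloppyAdd]
  rw [twoSum_left hp h hX hY hX1 hX2 hY0 hYX rfl]
  obtain ⟨h1, h2, h3⟩ := core_error hp h hX hY hX1 hX2 hY0 hYX hxl hyl rfl rfl rfl
  obtain ⟨h4, -⟩ := sum_facts hp h hX hX1 hX2 hY0 hYX
  rw [fastTwoSum hp h (h.1 _) (h.1 _) h4 h1, show X + xl + Y + yl = (X + Y) + (xl + yl) by ring]
  refine absorb (uu_pos p) (uu_le hp) (by linarith) h2 (le_trans ?_ h3)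
  refine le_trans (le_of_eq ?_) (abs_add_le _ _)
  congr 1
  ring

/-- The bound when the larger high word comes second and lies in `[1, 2)`. -/
lemma normalized_right {p : ℕ} (hp : 6 ≤ p) {RN : ℝ → ℝ} (h : IsRN p RN) {X Y xl yl : ℝ}
    (hX : X ∈ Fp p) (hY : Y ∈ Fp p) (hX1 : 1 ≤ X) (hX2 : X < 2) (hY0 : Y < 0) (hYX : -Y ≤ X / 2)
    (hxl : RN (X + xl) = X) (hyl : RN (Y + yl) = Y) :
    |(sloppyAdd RN Y yl X xl).1 + (sloppyAdd RN Y yl X xl).2 - (Y + yl + X + xl)| ≤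
      (3 * uu p ^ 2 + 10 * uu p ^ 3) * |Y + yl + X + xl| := by
  have hl := normalized_left hp h hX hY hX1 hX2 hY0 hYX hxl hyl
  have e1 := twoSum_left hp h hX hY hX1 hX2 hY0 hYX rfl
  have e2 := twoSum_right hp h hX hY hX1 hX2 hY0 hYX rfl
  simp only [sloppyAdd] at hl ⊢
  rw [e1] at hl
  rw [add_comm Y X, add_comm yl xl, e2, show Y + yl + X + xl = X + xl + Y + yl by ring]
  exact hl

/-! ### Scaling -/

/-- The rounding function conjugated by multiplication by `c`. -/
noncomputable def scaleRN (c : ℝ) (RN : ℝ → ℝ) (x : ℝ) : ℝ := c * RN (x / c)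

lemma scaleRN_mul {c : ℝ} (hc : c ≠ 0) (RN : ℝ → ℝ) (x : ℝ) : scaleRN c RN (c * x) = c * RN x := by
  rw [scaleRN, mul_div_cancel_left₀ _ hc]

lemma isRN_scaleRN {p : ℕ} {RN : ℝ → ℝ} (h : IsRN p RN) {c : ℝ} (hc : c ≠ 0)
    (hF : ∀ x, c * x ∈ Fp p ↔ x ∈ Fp p) : IsRN p (scaleRN c RN) := by
  refine ⟨fun x => (hF _).2 (h.1 _), fun x f hf => ?_⟩
  have hf' : f / c ∈ Fp p := by rwa [← hF, mul_div_cancel₀ _ hc]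
  have h1 := mul_le_mul_of_nonneg_left (h.2 (x / c) _ hf') (abs_nonneg c)
  rw [← abs_mul, ← abs_mul, mul_sub, mul_sub, mul_div_cancel₀ _ hc, mul_div_cancel₀ _ hc] at h1
  exact h1

lemma sloppyAdd_scaleRN {c : ℝ} (hc : c ≠ 0) (RN : ℝ → ℝ) (a b x y : ℝ) :
    sloppyAdd (scaleRN c RN) (c * a) (c * b) (c * x) (c * y) =
      (c * (sloppyAdd RN a b x y).1, c * (sloppyAdd RN a b x y).2) := by
  simp only [sloppyAdd, ← mul_add, ← mul_sub, scaleRN_mul hc]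

/-- Every nonzero real is brought into `[1, 2)` by a factor `± 2 ^ j`. -/
lemma exists_scale (p : ℕ) {x : ℝ} (hx : x ≠ 0) :
    ∃ c : ℝ, c ≠ 0 ∧ (∀ y, c * y ∈ Fp p ↔ y ∈ Fp p) ∧ 1 ≤ c * x ∧ c * x < 2 := by
  obtain ⟨t, ht, ht1, ht2⟩ := exists_binade hx
  have ht0 := ht.pos
  have hti : IsPow t⁻¹ := by
    obtain ⟨k, rfl⟩ := ht
    exact ⟨-k, (zpow_neg _ _).symm⟩
  have hF : ∀ y, t⁻¹ * y ∈ Fp p ↔ y ∈ Fp p := fun y =>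
    ⟨fun h => by
      have := mul_mem_Fp ht h
      rwa [mul_inv_cancel_left₀ ht0.ne'] at this, mul_mem_Fp hti⟩
  have b1 : 1 ≤ t⁻¹ * |x| := by rwa [inv_mul_eq_div, le_div_iff₀ ht0, one_mul]
  have b2 : t⁻¹ * |x| < 2 := by rwa [inv_mul_eq_div, div_lt_iff₀ ht0]
  rcases lt_or_gt_of_ne hx with h | h
  · refine ⟨-t⁻¹, neg_ne_zero.2 (inv_ne_zero ht0.ne'), fun y => ?_, ?_, ?_⟩
    · rw [← hF y, neg_mul]
      exact ⟨fun h => by simpa using neg_mem_Fp h, neg_mem_Fp⟩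
    · rw [abs_of_neg h] at b1; linarith
    · rw [abs_of_neg h] at b2; linarith
  · rw [abs_of_pos h] at b1 b2
    exact ⟨t⁻¹, inv_ne_zero ht0.ne', hF, b1, b2⟩

/-- Undoing the normalization. -/
lemma unscale {RN : ℝ → ℝ} {c a b x y K : ℝ} (hc : c ≠ 0)
    (h : |(sloppyAdd (scaleRN c RN) (c * a) (c * b) (c * x) (c * y)).1 +
        (sloppyAdd (scaleRN c RN) (c * a) (c * b) (c * x) (c * y)).2 -
        (c * a + c * b + c * x + c * y)| ≤ K * |c * a + c * b + c * x + c * y|) :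
    |(sloppyAdd RN a b x y).1 + (sloppyAdd RN a b x y).2 - (a + b + x + y)| ≤
      K * |a + b + x + y| := by
  rw [sloppyAdd_scaleRN hc] at h
  simp only [← mul_add, ← mul_sub, abs_mul] at h
  have hc' : 0 < |c| := abs_pos.2 hc
  rw [mul_left_comm] at h
  exact le_of_mul_le_mul_left h hc'

/-- Opposite signs and the size condition in normalized form. -/
lemma scaled_pair {c a b : ℝ} (hc : c ≠ 0) (ha : 1 ≤ c * a) (hab : a * b < 0)
    (hle : |b| ≤ |a| / 2) : c * b < 0 ∧ -(c * b) ≤ c * a / 2 := by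
  have hcb : c * b < 0 := by
    have h1 : (c * a) * (c * b) < 0 := by
      have : 0 < c ^ 2 := by positivity
      nlinarith
    by_contra hcon
    push Not at hcon
    nlinarith
  refine ⟨hcb, ?_⟩
  have h2 := mul_le_mul_of_nonneg_left hle (abs_nonneg c)
  rw [← abs_mul, mul_div_assoc', ← abs_mul, abs_of_neg hcb, abs_of_pos (by linarith)] at h2
  exact h2

theorem sloppy_relerr_three_u_sq_of_mild_cancellation :
    ∃ C : ℝ, 0 ≤ C ∧
      ∀ (p : ℕ), 6 ≤ p → ∀ RN : ℝ → ℝ, IsRN p RN → SymRN RN →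
        ∀ xh xl yh yl : ℝ, xh ∈ Fp p → xl ∈ Fp p → yh ∈ Fp p → yl ∈ Fp p →
          RN (xh + xl) = xh → RN (yh + yl) = yh → xh * yh < 0 →
          min |xh| |yh| ≤ max |xh| |yh| / 2 →
          |(sloppyAdd RN xh xl yh yl).1 + (sloppyAdd RN xh xl yh yl).2 -
              (xh + xl + yh + yl)| ≤
            (3 * ((2 : ℝ) ^ (-(p : ℤ))) ^ 2 + C * ((2 : ℝ) ^ (-(p : ℤ))) ^ 3) *
              |xh + xl + yh + yl| := by
  refine ⟨10, by norm_num, ?_⟩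
  intro p hp RN h _ xh xl yh yl hxh _ hyh _ hx hy hneg hmin
  have hx0 : xh ≠ 0 := by rintro rfl; simp at hneg
  have hy0 : yh ≠ 0 := by rintro rfl; simp at hneg
  change _ ≤ (3 * uu p ^ 2 + 10 * uu p ^ 3) * _
  rcases le_total |yh| |xh| with hle | hle
  · rw [min_eq_right hle, max_eq_left hle] at hmin
    obtain ⟨c, hc, hF, h1, h2⟩ := exists_scale p hx0
    obtain ⟨h3, h4⟩ := scaled_pair hc h1 hneg hmin
    exact unscale hc (normalized_left hp (isRN_scaleRN h hc hF) ((hF _).2 hxh)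
      ((hF _).2 hyh) h1 h2 h3 h4 (by rw [← mul_add, scaleRN_mul hc, hx])
      (by rw [← mul_add, scaleRN_mul hc, hy]))
  · rw [min_eq_left hle, max_eq_right hle] at hmin
    obtain ⟨c, hc, hF, h1, h2⟩ := exists_scale p hy0
    obtain ⟨h3, h4⟩ := scaled_pair hc h1 (by rwa [mul_comm]) hmin
    exact unscale hc (normalized_right hp (isRN_scaleRN h hc hF) ((hF _).2 hyh)
      ((hF _).2 hxh) h1 h2 h3 h4 (by rw [← mul_add, scaleRN_mul hc, hy])
      (by rw [← mul_add, scaleRN_mul hc, hx]))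
end

section
/- Let p = 53, u = 2^(−53), and let RN be the symmetric round-to-nearest function with ties-to-even. Set x_h = 844424930131969·2^(−49), x_l = 2^(−53), y_h = −4503599627370499·2^(−53), y_l = 4714705859903487·2^(−152) (all in F_53; they satisfy RN(x_h + x_l) = x_h, RN(y_h + y_l) = y_h, x_h·y_h < 0 and r(x_h, y_h) ≤ 1/2). Then the output of sloppy double-word addition with rounding RN satisfies |z_h + z_l − S| > 2.99·u²·|S|, where S = x_h + x_l + y_h + y_l; hence the relative error bound 3u² for sloppy addition under moderate cancellation is tight. -/
/-- A nonzero `f ∈ F_p` is *even* if `f · 2^(-e_f)` is an even integer, where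
`e_f = ⌊log₂ |f|⌋ - p + 1`; `0` is even. -/
def FpEven (p : ℕ) (f : ℝ) : Prop :=
  f = 0 ∨ ∃ m : ℤ, Even m ∧ f = (m : ℝ) * (2 : ℝ) ^ (Int.log 2 |f| - (p : ℤ) + 1)

/-- `RN` breaks ties to even. -/
def TiesToEven (p : ℕ) (RN : ℝ → ℝ) : Prop :=
  ∀ x : ℝ, RD p x ≠ RU p x → |x - RD p x| = |RU p x - x| →
    (RN x = RD p x ∨ RN x = RU p x) ∧ FpEven p (RN x)

/-- `RN` breaks ties away from zero. -/
def TiesToAway (p : ℕ) (RN : ℝ → ℝ) : Prop :=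
  ∀ x : ℝ, RD p x ≠ RU p x → |x - RD p x| = |RU p x - x| →
    (RN x = RD p x ∨ RN x = RU p x) ∧ |RN x| = max |RD p x| |RU p x|

/-- `r(x,y)`: the extent of cancellation when adding `x` and `y`. -/
noncomputable def cancelRatio (x y : ℝ) : ℝ :=
  if x * y < 0 then min |x| |y| / max |x| |y| else 0

lemma mem_Fp_of_eq {x : ℝ} (M e : ℤ) (hM : |M| ≤ 2 ^ 53 - 1) (hx : x = (M : ℝ) * (2 : ℝ) ^ e) :
    x ∈ Fp 53 := ⟨M, e, hM, hx⟩

lemma RN_exact {RN : ℝ → ℝ} (hRN : IsRN 53 RN) {x : ℝ} (hx : x ∈ Fp 53) : RN x = x := by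
  have h := hRN.2 x x hx
  rw [sub_self, abs_zero] at h
  exact sub_eq_zero.mp (abs_nonpos_iff.mp h)

/-- Consecutive multiples of `2^q` with significand at least `2^52` have no floating-point number
strictly between them: a number `M·2^e` with `e ≥ q` is itself a multiple of `2^q`, and one with
`e < q` would need `|M| ≥ 2^53`. -/
lemma Fp_gap {k q : ℤ} (hk : 2 ^ 52 ≤ k) {f : ℝ} (hf : f ∈ Fp 53) :
    f ≤ (k : ℝ) * 2 ^ q ∨ ((k : ℝ) + 1) * 2 ^ q ≤ f := by
  obtain ⟨M, e, hM, rfl⟩ := hf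
  by_contra! hcon
  obtain ⟨h1, h2⟩ := hcon
  rcases le_or_gt q e with hqe | hqe
  · obtain ⟨n, rfl⟩ := Int.le.dest hqe
    have hq : (0 : ℝ) < 2 ^ q := by positivity
    rw [zpow_add₀ two_ne_zero, zpow_natCast] at h1 h2
    have h1' : (k : ℝ) < M * 2 ^ n := by
      refine lt_of_mul_lt_mul_right ?_ hq.le
      linarith
    have h2' : (M : ℝ) * 2 ^ n < k + 1 := by
      refine lt_of_mul_lt_mul_right ?_ hq.le
      linarith
    norm_cast at h1' h2'
    omega
  · obtain ⟨n, hn⟩ := Int.le.dest (show e + 1 ≤ q from hqe)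
    have he : (0 : ℝ) < 2 ^ e := by positivity
    have hq : (2 : ℝ) ^ q = 2 * 2 ^ n * 2 ^ e := by
      rw [← hn, zpow_add₀ two_ne_zero, zpow_add₀ two_ne_zero, zpow_natCast, zpow_one]
      ring
    rw [hq] at h1
    have h1' : (k : ℝ) * (2 * 2 ^ n) < M := by
      refine lt_of_mul_lt_mul_right ?_ he.le
      linarith
    norm_cast at h1'
    have hn1 : (1 : ℤ) ≤ 2 ^ n := one_le_pow₀ (by norm_num)
    have hM2 := (abs_le.mp hM).2
    push_cast at h1'
    nlinarith

/-- A number strictly below the midpoint of two consecutive grid points rounds to the lower. -/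
lemma RN_near_low {RN : ℝ → ℝ} (hRN : IsRN 53 RN) {x : ℝ} (k q : ℤ) (hk : 2 ^ 52 ≤ k)
    (hk' : k + 1 ≤ 2 ^ 53 - 1) (h1 : (k : ℝ) * 2 ^ q ≤ x) (h2 : x < ((k : ℝ) + 1 / 2) * 2 ^ q) :
    RN x = (k : ℝ) * 2 ^ q := by
  have hmem : (k : ℝ) * 2 ^ q ∈ Fp 53 := ⟨k, q, by rw [abs_le]; constructor <;> omega, rfl⟩
  have hopt := hRN.2 x _ hmem
  rw [abs_of_nonpos (sub_nonpos.mpr h1), abs_le] at hopt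
  rcases Fp_gap (q := q) hk (hRN.1 x) with h | h <;> linarith [hopt.1, hopt.2]

/-- A number strictly above the midpoint of two consecutive grid points rounds to the upper. -/
lemma RN_near_high {RN : ℝ → ℝ} (hRN : IsRN 53 RN) {x : ℝ} (k q : ℤ) (hk : 2 ^ 52 ≤ k)
    (hk' : k + 1 ≤ 2 ^ 53 - 1) (h1 : ((k : ℝ) + 1 / 2) * 2 ^ q < x)
    (h2 : x ≤ ((k : ℝ) + 1) * 2 ^ q) :
    RN x = ((k : ℝ) + 1) * 2 ^ q := by
  have hmem : ((k : ℝ) + 1) * 2 ^ q ∈ Fp 53 :=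
    ⟨k + 1, q, by rw [abs_le]; constructor <;> omega, by push_cast; rfl⟩
  have hopt := hRN.2 x _ hmem
  rw [abs_of_nonneg (sub_nonneg.mpr h2), abs_le] at hopt
  rcases Fp_gap (q := q) hk (hRN.1 x) with h | h <;> linarith [hopt.1, hopt.2]

/-- For a normalized significand `k`, the parity of `k·2^q` as a floating-point number is the
parity of `k`, since `⌊log₂ (k·2^q)⌋ = q + 52`. -/
lemma even_of_FpEven {k q : ℤ} (hk : 2 ^ 52 ≤ k) (hk' : k < 2 ^ 53)
    (h : FpEven 53 ((k : ℝ) * 2 ^ q)) : Even k := by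
  have hq : (0 : ℝ) < 2 ^ q := by positivity
  have hkR : (2 : ℝ) ^ 52 ≤ k := by exact_mod_cast hk
  have hkR' : (k : ℝ) < 2 ^ 53 := by exact_mod_cast hk'
  have hpos : (0 : ℝ) < (k : ℝ) * 2 ^ q := mul_pos (by linarith [pow_pos (two_pos (α := ℝ)) 52]) hq
  rcases h with h | ⟨m, hm, h⟩
  · exact absurd h hpos.ne'
  · have hlog : Int.log 2 |(k : ℝ) * 2 ^ q| = q + 52 := by
      rw [abs_of_pos hpos]
      apply le_antisymm
      · rw [← Int.lt_add_one_iff, ← Int.lt_zpow_iff_log_lt (by norm_num) hpos]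
        push_cast
        rw [add_assoc, zpow_add₀ two_ne_zero, mul_comm]
        exact mul_lt_mul_of_pos_left (by exact_mod_cast hkR') hq
      · rw [← Int.zpow_le_iff_le_log (by norm_num) hpos]
        push_cast
        rw [zpow_add₀ two_ne_zero, mul_comm]
        exact mul_le_mul_of_nonneg_right (by exact_mod_cast hkR) hq.le
    rw [hlog, show q + 52 - ((53 : ℕ) : ℤ) + 1 = q by push_cast; ring] at h
    have hkm : (k : ℝ) = m := mul_right_cancel₀ hq.ne' h
    rwa [show k = m by exact_mod_cast hkm]

/-- The midpoint of two consecutive grid points rounds to the one with even significand `c`. -/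
lemma RN_tie {RN : ℝ → ℝ} (hties : TiesToEven 53 RN) {x : ℝ} (k q c : ℤ)
    (hk : 2 ^ 52 ≤ k) (hk' : k + 1 ≤ 2 ^ 53 - 1) (hx : x = ((k : ℝ) + 1 / 2) * 2 ^ q)
    (hc : c = k ∨ c = k + 1) (hce : Even c) :
    RN x = (c : ℝ) * 2 ^ q := by
  have hq : (0 : ℝ) < 2 ^ q := by positivity
  have hmem : (k : ℝ) * 2 ^ q ∈ Fp 53 := ⟨k, q, by rw [abs_le]; constructor <;> omega, rfl⟩
  have hmem' : ((k : ℝ) + 1) * 2 ^ q ∈ Fp 53 :=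
    ⟨k + 1, q, by rw [abs_le]; constructor <;> omega, by push_cast; rfl⟩
  have hRD : RD 53 x = (k : ℝ) * 2 ^ q := by
    refine IsGreatest.csSup_eq ⟨⟨hmem, by rw [hx]; linarith⟩, ?_⟩
    rintro f ⟨hf, hfx⟩
    rcases Fp_gap (q := q) hk hf with h | h <;> linarith
  have hRU : RU 53 x = ((k : ℝ) + 1) * 2 ^ q := by
    refine IsLeast.csInf_eq ⟨⟨hmem', by rw [hx]; linarith⟩, ?_⟩
    rintro f ⟨hf, hfx⟩
    rcases Fp_gap (q := q) hk hf with h | h <;> linarith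
  obtain ⟨hor, hev⟩ := hties x (by rw [hRD, hRU]; intro h; linarith)
    (by rw [hRD, hRU, hx]; congr 1; ring)
  rw [hRD, hRU] at hor
  rcases hor with h | h
  · rw [h] at hev ⊢
    have hke := even_of_FpEven hk (by omega) hev
    have : c = k := by
      rcases hc with rfl | rfl
      · rfl
      · exact absurd hce (by simpa [Int.even_add_one] using hke)
    rw [this]
  · rw [h] at hev ⊢
    have hke : Even (k + 1) :=
      even_of_FpEven (q := q) (by omega) (by omega) (by push_cast; exact hev)
    have : c = k + 1 := by
      rcases hc with rfl | rfl
      · exact absurd hke (by simpa [Int.even_add_one] using hce)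
      · rfl
    rw [this]
    push_cast
    rfl

theorem sloppy_three_u_sq_bound_is_tight
    (RN : ℝ → ℝ) (hRN : IsRN 53 RN) (hsym : SymRN RN) (hties : TiesToEven 53 RN)
    (xh xl yh yl : ℝ)
    (hxh : xh = (844424930131969 : ℝ) * (2 : ℝ) ^ (-49 : ℤ))
    (hxl : xl = (2 : ℝ) ^ (-53 : ℤ))
    (hyh : yh = -(4503599627370499 : ℝ) * (2 : ℝ) ^ (-53 : ℤ))
    (hyl : yl = (4714705859903487 : ℝ) * (2 : ℝ) ^ (-152 : ℤ)) :
    xh ∈ Fp 53 ∧ xl ∈ Fp 53 ∧ yh ∈ Fp 53 ∧ yl ∈ Fp 53 ∧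
      RN (xh + xl) = xh ∧ RN (yh + yl) = yh ∧ xh * yh < 0 ∧
      cancelRatio xh yh ≤ 1 / 2 ∧
      |(sloppyAdd RN xh xl yh yl).1 + (sloppyAdd RN xh xl yh yl).2 -
          (xh + xl + yh + yl)| >
        2.99 * ((2 : ℝ) ^ (-53 : ℤ)) ^ 2 * |xh + xl + yh + yl| := by
  have hxm : xh ∈ Fp 53 :=
    mem_Fp_of_eq 844424930131969 (-49) (by norm_num) (by rw [hxh]; norm_num)
  have hlm : xl ∈ Fp 53 := mem_Fp_of_eq 1 (-53) (by norm_num) (by rw [hxl]; norm_num)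
  have hym : yh ∈ Fp 53 :=
    mem_Fp_of_eq (-4503599627370499) (-53) (by norm_num) (by rw [hyh]; norm_num)
  have hym' : yl ∈ Fp 53 :=
    mem_Fp_of_eq 4714705859903487 (-152) (by norm_num) (by rw [hyl]; norm_num)
  have hx : RN (xh + xl) = xh := by
    rw [RN_tie hties 6755399441055752 (-52) 6755399441055752 (by norm_num) (by norm_num)
      (by rw [hxh, hxl]; norm_num) (by norm_num) (by decide), hxh]
    norm_num
  -- `y_h + y_l` is negative, so the grid lemmas apply to its opposite.
  have hy : RN (yh + yl) = yh := by
    have h : RN (-(yh + yl)) = -yh := by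
      rw [RN_near_high hRN 4503599627370498 (-53) (by norm_num) (by norm_num)
        (by rw [hyh, hyl]; norm_num) (by rw [hyh, hyl]; norm_num), hyh]
      norm_num
    rw [hsym] at h
    exact neg_injective h
  have hxy : xh * yh < 0 := by rw [hxh, hyh]; norm_num
  refine ⟨hxm, hlm, hym, hym', hx, hy, hxy, ?_, ?_⟩
  · have hax : |xh| = xh := abs_of_pos (by rw [hxh]; norm_num)
    have hay : |yh| = -yh := abs_of_neg (by rw [hyh]; norm_num)
    have hle : -yh ≤ xh := by rw [hxh, hyh]; norm_num
    rw [cancelRatio, if_pos hxy, hax, hay, min_eq_right hle, max_eq_left hle, hxh, hyh]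
    norm_num
  have hsh : RN (xh + yh) = 4503599627370502 * (2 : ℝ) ^ (-52 : ℤ) := by
    rw [RN_tie hties 4503599627370502 (-52) 4503599627370502 (by norm_num) (by norm_num)
      (by rw [hxh, hyh]; norm_num) (by norm_num) (by decide)]
    norm_num
  have ha : RN (4503599627370502 * (2 : ℝ) ^ (-52 : ℤ) - yh) = xh := by
    rw [RN_tie hties 6755399441055751 (-52) 6755399441055752 (by norm_num) (by norm_num)
      (by rw [hyh]; norm_num) (by norm_num) (by decide), hxh]
    norm_num
  have hb : RN (4503599627370502 * (2 : ℝ) ^ (-52 : ℤ) - xh)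
      = -4503599627370500 * (2 : ℝ) ^ (-53 : ℤ) := by
    rw [RN_exact hRN (mem_Fp_of_eq (-4503599627370500) (-53) (by norm_num)
      (by rw [hxh]; norm_num)), hxh]
    norm_num
  have ht1 : RN (xh - xh) = 0 := by
    rw [sub_self]
    exact RN_exact hRN (mem_Fp_of_eq 0 0 (by norm_num) (by norm_num))
  have ht2 : RN (yh - -4503599627370500 * (2 : ℝ) ^ (-53 : ℤ)) = (2 : ℝ) ^ (-53 : ℤ) := by
    rw [RN_exact hRN (mem_Fp_of_eq 1 (-53) (by norm_num) (by rw [hyh]; norm_num)), hyh]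
    norm_num
  have hsl : RN (0 + (2 : ℝ) ^ (-53 : ℤ)) = (2 : ℝ) ^ (-53 : ℤ) := by
    rw [zero_add, ← hxl]
    exact RN_exact hRN hlm
  have hv : RN (xl + yl) = 4503599627370529 * (2 : ℝ) ^ (-105 : ℤ) := by
    rw [RN_near_low hRN 4503599627370529 (-105) (by norm_num) (by norm_num)
      (by rw [hxl, hyl]; norm_num) (by rw [hxl, hyl]; norm_num)]
    norm_num
  have hw : RN ((2 : ℝ) ^ (-53 : ℤ) + 4503599627370529 * (2 : ℝ) ^ (-105 : ℤ))
      = 4503599627370512 * (2 : ℝ) ^ (-104 : ℤ) := by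
    rw [RN_tie hties 4503599627370512 (-104) 4503599627370512 (by norm_num) (by norm_num)
      (by norm_num) (by norm_num) (by decide)]
    norm_num
  have hzh : RN (4503599627370502 * (2 : ℝ) ^ (-52 : ℤ) + 4503599627370512 * (2 : ℝ) ^ (-104 : ℤ))
      = 4503599627370503 * (2 : ℝ) ^ (-52 : ℤ) := by
    rw [RN_near_low hRN 4503599627370503 (-52) (by norm_num) (by norm_num)
      (by norm_num) (by norm_num)]
    norm_num
  have hd : RN (4503599627370503 * (2 : ℝ) ^ (-52 : ℤ) - 4503599627370502 * (2 : ℝ) ^ (-52 : ℤ))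
      = (2 : ℝ) ^ (-52 : ℤ) := by
    rw [RN_exact hRN (mem_Fp_of_eq 1 (-52) (by norm_num) (by norm_num))]
    norm_num
  have hzl : RN (4503599627370512 * (2 : ℝ) ^ (-104 : ℤ) - (2 : ℝ) ^ (-52 : ℤ))
      = (2 : ℝ) ^ (-100 : ℤ) := by
    rw [RN_exact hRN (mem_Fp_of_eq 1 (-100) (by norm_num) (by norm_num))]
    norm_num
  have hout : sloppyAdd RN xh xl yh yl =
      (4503599627370503 * (2 : ℝ) ^ (-52 : ℤ), (2 : ℝ) ^ (-100 : ℤ)) := by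
    simp only [sloppyAdd, hsh, ha, hb, ht1, ht2, hsl, hv, hw, hzh, hd, hzl]
  rw [hout, hxh, hxl, hyh, hyl]
  -- The output is below the exact sum `S`, which is positive.
  rw [gt_iff_lt, abs_of_pos (by norm_num), abs_of_neg (by norm_num)]
  norm_num
end
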